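/- Along any gradient flow of the empirical risk of a deep linear network, for every layer 1 ≤ k ≤ L and every t ≥ 0, ‖W_k(t)‖_F² − ‖W_k(t)‖₂² ≤ D, where D depends only on the initialization W(0). -/

import Mathlib

/-!
The proof rests on the conservation law of deep linear networks. Consecutive layer gradients satisfy
`∂R/∂W_k * W_kᵀ = W_{k+1}ᵀ * ∂R/∂W_{k+1}` (`gradLayer_mul_transpose`), so along the flow the matrix
`E_k = W_k W_kᵀ - W_{k+1}ᵀ W_{k+1}` does not depend on time (`balance_const`).

Taking traces, `‖W_k‖_F² - ‖W_{k+1}‖_F²` is conserved, hence so is `‖W_k‖_F² - ‖W_L‖_F²`.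
Taking operator norms, `‖W_{k+1}‖₂² = ‖W_{k+1}ᵀ W_{k+1}‖₂ ≤ ‖W_k‖₂² + ‖E_k‖₂`, which telescopes to
`‖W_L‖₂² ≤ ‖W_k‖₂² + ∑ ‖E_j‖₂`. The last layer has a single row, so `‖W_L‖_F ≤ ‖W_L‖₂`, and
combining the three facts gives the bound. The spectral norm is handled through Mathlib's L2 operator
norm on matrices, with which it agrees (`specNorm_eq_l2`).
-/

open Matrix Filter
open scoped BigOperators

noncomputable section

/-- Euclidean norm of a vector in `ℝ^m`. -/
def vecNorm {m : Type*} [Fintype m] (v : m → ℝ) : ℝ :=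
  Real.sqrt (∑ i, (v i) ^ 2)

/-- Frobenius norm of a real matrix. -/
def frobNorm {m n : Type*} [Fintype m] [Fintype n] (M : Matrix m n ℝ) : ℝ :=
  Real.sqrt (∑ i, ∑ j, (M i j) ^ 2)

/-- Spectral norm (operator 2-norm) of a real matrix. -/
def specNorm {m n : Type*} [Fintype m] [Fintype n] (M : Matrix m n ℝ) : ℝ :=
  sSup {c : ℝ | ∃ v : n → ℝ, vecNorm v = 1 ∧ c = vecNorm (M.mulVec v)}

/-- `(u, v)` is a top singular vector pair of `M`: both are unit vectors,
`M v = ‖M‖₂ u` and `Mᵀ u = ‖M‖₂ v`. -/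
def IsTopSingularPair {m n : Type*} [Fintype m] [Fintype n]
    (M : Matrix m n ℝ) (u : m → ℝ) (v : n → ℝ) : Prop :=
  vecNorm u = 1 ∧ vecNorm v = 1 ∧
    M.mulVec v = specNorm M • u ∧ Mᵀ.mulVec u = specNorm M • v

/-- Parameters of a deep linear network: layer `k` (0-indexed; paper layer `k+1`)
is a matrix mapping `ℝ^{dim k}` to `ℝ^{dim (k+1)}`. -/
abbrev Layers (dim : ℕ → ℕ) := ∀ j : ℕ, Matrix (Fin (dim (j+1))) (Fin (dim j)) ℝ

/-- Product `W_{j-1} ⋯ W_0` of the bottom `j` layers (paper: `W_j ⋯ W_1`). -/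
def prodUpTo {dim : ℕ → ℕ} (W : Layers dim) : ∀ j : ℕ, Matrix (Fin (dim j)) (Fin (dim 0)) ℝ
  | 0 => 1
  | (j+1) => W j * prodUpTo W j

/-- Product `W_{L-1} ⋯ W_j` of the layers from `j` up to the top layer `L-1`
(paper: `W_L ⋯ W_{j+1}`); for `j ≥ L` it is a pseudo-identity. -/
def prodFrom {dim : ℕ → ℕ} (L : ℕ) (W : Layers dim) (j : ℕ) :
    Matrix (Fin (dim L)) (Fin (dim j)) ℝ :=
  if h : j < L then prodFrom L W (j+1) * W j
  else Matrix.of fun i j' => if (i : ℕ) = (j' : ℕ) then 1 else 0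
  termination_by L - j
  decreasing_by omega

/-- The linear predictor `w_prod = (W_L ⋯ W_1)ᵀ ∈ ℝ^d` induced by the network
(recall `dim L = 1`). -/
def wprod {dim : ℕ → ℕ} (L : ℕ) (W : Layers dim) : Fin (dim 0) → ℝ :=
  fun j => ∑ a, prodUpTo W L a j

/-- Empirical risk of a linear predictor `w`: `R(w) = (1/n) ∑ᵢ ℓ(⟨w, zᵢ⟩)`. -/
def riskV {n d : ℕ} (ℓ : ℝ → ℝ) (z : Fin n → Fin d → ℝ) (w : Fin d → ℝ) : ℝ :=
  (n : ℝ)⁻¹ * ∑ i, ℓ (w ⬝ᵥ z i)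

/-- Gradient of the risk w.r.t. the linear predictor: `∇R(w) = (1/n) ∑ᵢ ℓ'(⟨w, zᵢ⟩) zᵢ`. -/
def gradRiskV {n d : ℕ} (ℓ' : ℝ → ℝ) (z : Fin n → Fin d → ℝ) (w : Fin d → ℝ) :
    Fin d → ℝ :=
  (n : ℝ)⁻¹ • ∑ i, ℓ' (w ⬝ᵥ z i) • z i

/-- The partial gradient of the empirical risk with respect to layer `k`:
`∂R/∂W_k = (W_L ⋯ W_{k+1})ᵀ ∇R(w_prod)ᵀ (W_{k-1} ⋯ W_1)ᵀ`. -/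
def gradLayer {dim : ℕ → ℕ} (L : ℕ) (ℓ' : ℝ → ℝ) {n : ℕ}
    (z : Fin n → Fin (dim 0) → ℝ) (W : Layers dim) (k : ℕ) :
    Matrix (Fin (dim (k+1))) (Fin (dim k)) ℝ :=
  (prodFrom L W (k+1))ᵀ *
    (Matrix.of fun (_ : Fin (dim L)) (j : Fin (dim 0)) => gradRiskV ℓ' z (wprod L W) j) *
    (prodUpTo W k)ᵀ

/-- Empirical risk of the network. -/
def riskW {dim : ℕ → ℕ} (L : ℕ) (ℓ : ℝ → ℝ) {n : ℕ}
    (z : Fin n → Fin (dim 0) → ℝ) (W : Layers dim) : ℝ :=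
  riskV ℓ z (wprod L W)

/-- Gradient flow: `dW(t)/dt = −∇R(W(t))` for all `t ≥ 0`, entrywise on each layer. -/
def IsGradientFlow {dim : ℕ → ℕ} (L : ℕ) (ℓ' : ℝ → ℝ) {n : ℕ}
    (z : Fin n → Fin (dim 0) → ℝ) (W : ℝ → Layers dim) : Prop :=
  ∀ t : ℝ, 0 ≤ t → ∀ k < L, ∀ i j,
    HasDerivAt (fun s => W s k i j) (-(gradLayer L ℓ' z (W t) k i j)) t

/-- The initialization-dependent constant `D`. -/
def Dconst {dim : ℕ → ℕ} (L : ℕ) (W0 : Layers dim) : ℝ :=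
  (⨆ k : Fin L, frobNorm (W0 k) ^ 2) - frobNorm (W0 (L-1)) ^ 2
    + ∑ k ∈ Finset.range (L-1),
        specNorm (W0 k * (W0 k)ᵀ - (W0 (k+1))ᵀ * W0 (k+1))

/-- Euclidean norm of a parameter tuple (all entries of the first `L` layers concatenated). -/
def paramNorm {dim : ℕ → ℕ} (L : ℕ) (V : Layers dim) : ℝ :=
  Real.sqrt (∑ k ∈ Finset.range L, frobNorm (V k) ^ 2)

/-- Squared Euclidean norm of the full gradient `∇R(W)`. -/
def gradNormSq {dim : ℕ → ℕ} (L : ℕ) (ℓ' : ℝ → ℝ) {n : ℕ}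
    (z : Fin n → Fin (dim 0) → ℝ) (W : Layers dim) : ℝ :=
  ∑ k ∈ Finset.range L, frobNorm (gradLayer L ℓ' z W k) ^ 2

/-- The data-dependent constant `α = min_{‖ξ‖=1, ξ ⟂ ū} max_{i ∈ S} ⟨ξ, zᵢ⟩`,
where `S` is the set of support vectors. -/
def alphaConst {n d : ℕ} (z : Fin n → Fin d → ℝ) (ubar : Fin d → ℝ) (γ : ℝ) : ℝ :=
  sInf {c : ℝ | ∃ ξ : Fin d → ℝ, vecNorm ξ = 1 ∧ ξ ⬝ᵥ ubar = 0 ∧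
    c = sSup {r : ℝ | ∃ i : Fin n, ubar ⬝ᵥ z i = γ ∧ r = ξ ⬝ᵥ z i}}

/-- Orthogonal projection onto the orthogonal complement of `span(ū)` (for `ū` a unit vector). -/
def projPerp {d : ℕ} (ubar : Fin d → ℝ) (w : Fin d → ℝ) : Fin d → ℝ :=
  w - (w ⬝ᵥ ubar) • ubar

section Helpers

open scoped Matrix.Norms.L2Operator

lemma vecNorm_eq_norm {m : Type*} [Fintype m] (v : m → ℝ) : vecNorm v = ‖WithLp.toLp 2 v‖ := by
  simp [vecNorm, EuclideanSpace.norm_eq]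

/-- The spectral norm is the L2 operator norm. This includes matrices without columns, where
`specNorm` is `sSup ∅ = 0`. -/
lemma specNorm_eq_l2 {m n : Type*} [Fintype m] [Fintype n] [DecidableEq n]
    (M : Matrix m n ℝ) : specNorm M = ‖M‖ := by
  rw [Matrix.l2_opNorm_def, ← ContinuousLinearMap.sSup_sphere_eq_norm]
  unfold specNorm
  congr 1
  ext c
  constructor
  · rintro ⟨v, hv, rfl⟩
    refine ⟨WithLp.toLp 2 v, ?_, ?_⟩
    · simpa [vecNorm_eq_norm] using hv
    · rw [vecNorm_eq_norm]
      rfl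
  · rintro ⟨v, hv, rfl⟩
    refine ⟨v.ofLp, ?_, ?_⟩
    · simpa [vecNorm_eq_norm] using hv
    · rw [vecNorm_eq_norm]
      rfl

lemma l2_norm_transpose_mul_self {m n : Type*} [Fintype m] [Fintype n] [DecidableEq n]
    (M : Matrix m n ℝ) : ‖Mᵀ * M‖ = ‖M‖ ^ 2 := by
  rw [← Matrix.conjTranspose_eq_transpose_of_trivial, Matrix.l2_opNorm_conjTranspose_mul_self, sq]

lemma l2_norm_mul_transpose_self {m n : Type*} [Fintype m] [Fintype n] [DecidableEq m]
    [DecidableEq n] (M : Matrix m n ℝ) : ‖M * Mᵀ‖ = ‖M‖ ^ 2 := by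
  have h := l2_norm_transpose_mul_self Mᵀ
  rw [Matrix.transpose_transpose] at h
  rw [h, ← Matrix.conjTranspose_eq_transpose_of_trivial, Matrix.l2_opNorm_conjTranspose]

lemma specNorm_nonneg {m n : Type*} [Fintype m] [Fintype n] [DecidableEq n]
    (M : Matrix m n ℝ) : 0 ≤ specNorm M := by
  rw [specNorm_eq_l2]
  exact norm_nonneg _

/-- A bound on the squared spectral norm of `B` in terms of that of `A` and of the imbalance
`A Aᵀ - Bᵀ B`, to be used for consecutive layers `A = W_k`, `B = W_{k+1}`. -/
lemma specNorm_sq_le {l m n : Type*} [Fintype l] [Fintype m] [Fintype n] [DecidableEq m]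
    [DecidableEq n] (A : Matrix m n ℝ) (B : Matrix l m ℝ) :
    specNorm B ^ 2 ≤ specNorm A ^ 2 + specNorm (A * Aᵀ - Bᵀ * B) := by
  simp only [specNorm_eq_l2]
  rw [← l2_norm_transpose_mul_self B, ← l2_norm_mul_transpose_self A]
  calc ‖Bᵀ * B‖ = ‖A * Aᵀ - (A * Aᵀ - Bᵀ * B)‖ := by rw [sub_sub_cancel]
    _ ≤ _ := norm_sub_le _ _

lemma frobNorm_sq {m n : Type*} [Fintype m] [Fintype n] (M : Matrix m n ℝ) :
    frobNorm M ^ 2 = ∑ i, ∑ j, M i j ^ 2 :=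
  Real.sq_sqrt (Finset.sum_nonneg fun _ _ => Finset.sum_nonneg fun _ _ => sq_nonneg _)

lemma trace_mul_transpose_eq_frobNorm_sq {m n : Type*} [Fintype m] [Fintype n]
    (M : Matrix m n ℝ) : (M * Mᵀ).trace = frobNorm M ^ 2 := by
  rw [frobNorm_sq]
  simp [Matrix.trace, Matrix.mul_apply, sq]

/-- For a matrix with at most one row, the Frobenius norm is at most the spectral norm. -/
lemma frobNorm_sq_le_specNorm_sq {m n : Type*} [Fintype m] [Fintype n] [DecidableEq m]
    [DecidableEq n] [Subsingleton m] (M : Matrix m n ℝ) :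
    frobNorm M ^ 2 ≤ specNorm M ^ 2 := by
  rcases isEmpty_or_nonempty m with _ | ⟨⟨i⟩⟩
  · rw [frobNorm_sq]
    simpa using sq_nonneg (specNorm M)
  · -- With one row, `M Mᵀ` is the `1 × 1` matrix with entry `‖M‖_F²`.
    have hM : M * Mᵀ = Matrix.diagonal fun _ => frobNorm M ^ 2 := by
      ext i j
      obtain rfl := Subsingleton.elim i j
      have : Unique m := uniqueOfSubsingleton i
      rw [← trace_mul_transpose_eq_frobNorm_sq, Matrix.diagonal_apply_eq, Matrix.trace,
        Fintype.sum_subsingleton _ i, Matrix.diag_apply]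
    rw [specNorm_eq_l2, ← l2_norm_mul_transpose_self, hM, Matrix.l2_opNorm_diagonal,
      Pi.norm_def]
    exact (le_abs_self _).trans (Finset.le_sup (f := fun _ : m => ‖frobNorm M ^ 2‖₊)
      (Finset.mem_univ i))

end Helpers

/-- The identity behind the conservation law: both sides equal
`(W_{L-1} ⋯ W_{k+1})ᵀ ∇R(w_prod)ᵀ (W_k ⋯ W_0)ᵀ`, with layers indexed from `0`. -/
lemma gradLayer_mul_transpose {dim : ℕ → ℕ} (L : ℕ) (ℓ' : ℝ → ℝ) {n : ℕ}
    (z : Fin n → Fin (dim 0) → ℝ) (W : Layers dim) (k : ℕ) (hk : k + 1 < L) :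
    gradLayer L ℓ' z W k * (W k)ᵀ = (W (k + 1))ᵀ * gradLayer L ℓ' z W (k + 1) := by
  have h1 : prodFrom L W (k + 1) = prodFrom L W (k + 1 + 1) * W (k + 1) := by
    rw [prodFrom, dif_pos hk]
  have h2 : prodUpTo W (k + 1) = W k * prodUpTo W k := rfl
  unfold gradLayer
  rw [h1, h2]
  simp only [Matrix.transpose_mul, Matrix.mul_assoc]

/-- The imbalance between consecutive layers is conserved along the gradient flow. -/
lemma balance_const {dim : ℕ → ℕ} {L : ℕ} {ℓ' : ℝ → ℝ} {n : ℕ}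
    {z : Fin n → Fin (dim 0) → ℝ} {W : ℝ → Layers dim} (hflow : IsGradientFlow L ℓ' z W)
    {k : ℕ} (hk : k + 1 < L) {t : ℝ} (ht : 0 ≤ t) :
    W t k * (W t k)ᵀ - (W t (k + 1))ᵀ * W t (k + 1) =
      W 0 k * (W 0 k)ᵀ - (W 0 (k + 1))ᵀ * W 0 (k + 1) := by
  ext i j
  have hd : ∀ s : ℝ, 0 ≤ s → HasDerivAt
      (fun s => (W s k * (W s k)ᵀ - (W s (k + 1))ᵀ * W s (k + 1)) i j) 0 s := by
    intro s hs
    have h := gradLayer_mul_transpose L ℓ' z (W s) k hk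
    have hij := congrFun (congrFun h i) j
    have hji := congrFun (congrFun h j) i
    have hA := HasDerivAt.fun_sum (u := Finset.univ) fun a _ =>
      (hflow s hs k (by omega) i a).mul (hflow s hs k (by omega) j a)
    have hB := HasDerivAt.fun_sum (u := Finset.univ) fun a _ =>
      (hflow s hs (k + 1) hk a i).mul (hflow s hs (k + 1) hk a j)
    simp only [Matrix.mul_apply, Matrix.transpose_apply] at hij hji
    have hfun : (fun s => (W s k * (W s k)ᵀ - (W s (k + 1))ᵀ * W s (k + 1)) i j) =
        fun s => ∑ a, W s k i a * W s k j a - ∑ a, W s (k + 1) a i * W s (k + 1) a j := by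
      funext s
      simp [Matrix.mul_apply]
    rw [hfun]
    refine (hA.fun_sub hB).congr_deriv ?_
    -- The product rule gives the `(i, j)` entry of `gradLayer_mul_transpose` plus its transpose.
    simp only [Finset.sum_add_distrib, neg_mul, mul_neg, Finset.sum_neg_distrib]
    have e1 : ∑ a, W s k i a * gradLayer L ℓ' z (W s) k j a =
        ∑ a, gradLayer L ℓ' z (W s) k j a * W s k i a :=
      Finset.sum_congr rfl fun _ _ => mul_comm _ _
    have e2 : ∑ a, gradLayer L ℓ' z (W s) (k + 1) a i * W s (k + 1) a j =
        ∑ a, W s (k + 1) a j * gradLayer L ℓ' z (W s) (k + 1) a i :=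
      Finset.sum_congr rfl fun _ _ => mul_comm _ _
    rw [e1, e2, hij, hji]
    ring
  exact constant_of_has_deriv_right_zero (a := 0) (b := t)
    (fun s hs => (hd s hs.1).continuousAt.continuousWithinAt)
    (fun s hs => (hd s hs.1).hasDerivWithinAt) t ⟨ht, le_rfl⟩

lemma frobNorm_sq_sub_const {dim : ℕ → ℕ} {L : ℕ} {ℓ' : ℝ → ℝ} {n : ℕ}
    {z : Fin n → Fin (dim 0) → ℝ} {W : ℝ → Layers dim} (hflow : IsGradientFlow L ℓ' z W)
    {k : ℕ} (hk : k + 1 < L) {t : ℝ} (ht : 0 ≤ t) :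
    frobNorm (W t k) ^ 2 - frobNorm (W t (k + 1)) ^ 2 =
      frobNorm (W 0 k) ^ 2 - frobNorm (W 0 (k + 1)) ^ 2 := by
  have h := congrArg Matrix.trace (balance_const hflow hk ht)
  simpa only [Matrix.trace_sub, Matrix.trace_mul_comm (W _ (k + 1))ᵀ,
    trace_mul_transpose_eq_frobNorm_sq] using h

theorem stmt2
    (dim : ℕ → ℕ) (L n : ℕ) (hL : 1 ≤ L) (hdimL : dim L = 1) (hn : 0 < n)
    (x : Fin n → Fin (dim 0) → ℝ) (y : Fin n → ℝ) (z : Fin n → Fin (dim 0) → ℝ)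
    (hx : ∀ i, vecNorm (x i) ≤ 1) (hy : ∀ i, y i = 1 ∨ y i = -1)
    (hz : ∀ i, z i = y i • x i)
    (ℓ ℓ' : ℝ → ℝ) (hderiv : ∀ s : ℝ, HasDerivAt ℓ (ℓ' s) s) (hcont : Continuous ℓ')
    (W : ℝ → Layers dim) (hflow : IsGradientFlow L ℓ' z W)
    :
    ∀ k < L, ∀ t : ℝ, 0 ≤ t →
      frobNorm (W t k) ^ 2 - specNorm (W t k) ^ 2 ≤ Dconst L (W 0) := by
  intro k hk t ht
  obtain ⟨N, rfl⟩ : ∃ N, L = N + 1 := ⟨L - 1, by omega⟩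
  have hkN : k ≤ N := by omega
  have hfrob : ∀ m, k ≤ m → m ≤ N →
      frobNorm (W t k) ^ 2 - frobNorm (W t m) ^ 2 =
        frobNorm (W 0 k) ^ 2 - frobNorm (W 0 m) ^ 2 := by
    intro m hm
    induction m, hm using Nat.le_induction with
    | base => simp
    | succ m hm ih =>
      intro hmN
      have h1 := ih (by omega)
      have h2 := frobNorm_sq_sub_const hflow (k := m) (by omega) ht
      linarith
  -- The sum starts at `0` rather than at `k`; the extra terms are nonnegative.
  have hspec : ∀ m, k ≤ m → m ≤ N →
      specNorm (W t m) ^ 2 ≤ specNorm (W t k) ^ 2 + ∑ j ∈ Finset.range m,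
        specNorm (W 0 j * (W 0 j)ᵀ - (W 0 (j + 1))ᵀ * W 0 (j + 1)) := by
    intro m hm
    induction m, hm using Nat.le_induction with
    | base =>
      intro _
      exact le_add_of_nonneg_right (Finset.sum_nonneg fun _ _ => specNorm_nonneg _)
    | succ m hm ih =>
      intro hmN
      have h1 := ih (by omega)
      have h2 := specNorm_sq_le (W t m) (W t (m + 1))
      rw [balance_const hflow (by omega) ht] at h2
      rw [Finset.sum_range_succ]
      linarith
  have hlast : frobNorm (W t N) ^ 2 ≤ specNorm (W t N) ^ 2 := by
    have : Subsingleton (Fin (dim (N + 1))) := by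
      rw [hdimL]
      infer_instance
    exact frobNorm_sq_le_specNorm_sq _
  have hmax : frobNorm (W 0 k) ^ 2 ≤ ⨆ j : Fin (N + 1), frobNorm (W 0 j) ^ 2 :=
    le_ciSup (f := fun j : Fin (N + 1) => frobNorm (W 0 j) ^ 2)
      (Set.finite_range _).bddAbove ⟨k, hk⟩
  have h1 := hfrob N hkN le_rfl
  have h2 := hspec N hkN le_rfl
  change _ ≤ (⨆ j : Fin (N + 1), frobNorm (W 0 j) ^ 2) - frobNorm (W 0 N) ^ 2
    + ∑ j ∈ Finset.range N, specNorm (W 0 j * (W 0 j)ᵀ - (W 0 (j + 1))ᵀ * W 0 (j + 1))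
  linarith

end
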